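/- Let T > 0, let c > 0 and set Φ(x) = c‖x‖^{−1} on ℝ² ∖ {0}, and let a : ℝ² → ℝ be smooth with 0 ≤ a ≤ 1, a ≡ 1 on B_1(0) and supp a ⊆ B_2(0); for λ > 0 set a_λ(x) = a(x/λ). Suppose θ : [0,T] × ℝ² → ℝ and u : [0,T] × ℝ² → ℝ² are smooth, there is a compact set K ⊆ ℝ² with supp θ(t, ·) ⊆ K for every t ∈ [0,T], and: (i) ∂_t θ + u·∇θ = 0 on [0,T] × ℝ²; (ii) u(t, ·) = ∇^⊥(Φ * θ(t, ·)) for every t ∈ [0,T]. Then for every λ > 0, every t ∈ [0,T], every x ∈ ℝ², and each component i ∈ {1,2}: u^i(t,x) = u^i(0,x) + ((a_λ Φ) * (∇^⊥(θ(t,·) − θ(0,·)))^i)(x) − ∫₀^t ∑_{j=1}^{2} ( ∂_j (∇^⊥((1 − a_λ)Φ))^i * (θ(s,·) u^j(s,·)) )(x) ds. -/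

import Mathlib

open MeasureTheory Metric
open scoped ENNReal

noncomputable section

/-- Abbreviation for two-dimensional Euclidean space. -/
abbrev E2 := EuclideanSpace ℝ (Fin 2)

/-- The partial derivative in the `i`-th coordinate direction. -/
def pd (i : Fin 2) (f : E2 → ℝ) : E2 → ℝ :=
  fun x => fderiv ℝ f x (EuclideanSpace.single i 1)

/-- The perpendicular gradient `∇^⊥ f = (−∂₂f, ∂₁f)` (with `0`-based indices). -/
def perpGrad (f : E2 → ℝ) : E2 → Fin 2 → ℝ :=
  fun x => ![-(pd 1 f x), pd 0 f x]

section SerfatiIdentity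

open Set Filter Topology
open scoped Convolution ContDiff

theorem contDiff_pd {f : E2 → ℝ} (hf : ContDiff ℝ ∞ f) (i : Fin 2) : ContDiff ℝ ∞ (pd i f) :=
  (hf.fderiv_right (m := ∞) (by simp)).clm_apply contDiff_const

theorem HasCompactSupport.pd {f : E2 → ℝ} (hf : HasCompactSupport f) (i : Fin 2) :
    HasCompactSupport (pd i f) :=
  (hf.fderiv ℝ).comp_left (g := fun L : E2 →L[ℝ] ℝ => L (EuclideanSpace.single i 1)) rfl

theorem pd_neg (i : Fin 2) (f : E2 → ℝ) : pd i (fun x => -f x) = fun x => -pd i f x := by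
  ext x
  simp [pd, fderiv_fun_neg]

theorem pd_sub {f g : E2 → ℝ} {x : E2} (hf : DifferentiableAt ℝ f x)
    (hg : DifferentiableAt ℝ g x) (i : Fin 2) :
    pd i (fun x => f x - g x) x = pd i f x - pd i g x := by
  simp [pd, fderiv_fun_sub hf hg]

theorem pd_mul {f g : E2 → ℝ} {x : E2} (hf : DifferentiableAt ℝ f x)
    (hg : DifferentiableAt ℝ g x) (i : Fin 2) :
    pd i (fun x => f x * g x) x = f x * pd i g x + g x * pd i f x := by
  simp [pd, fderiv_fun_mul hf hg]

/-- Partial derivatives of a smooth function commute. -/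
theorem pd_comm {f : E2 → ℝ} (hf : ContDiff ℝ ∞ f) (i j : Fin 2) (x : E2) :
    pd i (pd j f) x = pd j (pd i f) x := by
  have hd : DifferentiableAt ℝ (fderiv ℝ f) x :=
    (hf.fderiv_right (m := ∞) (by simp)).differentiable (by simp) x
  have key : ∀ i j : Fin 2, pd i (pd j f) x =
      fderiv ℝ (fderiv ℝ f) x (EuclideanSpace.single i 1) (EuclideanSpace.single j 1) := by
    intro i j
    unfold pd
    rw [fderiv_clm_apply hd (differentiableAt_const _)]
    simp
  rw [key, key]
  exact (hf.contDiffAt.isSymmSndFDerivAt (by simpa using ENat.LEInfty.out)).eq _ _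

/-- A perpendicular gradient is divergence free. -/
theorem sum_pd_perpGrad_eq_zero {f : E2 → ℝ} (hf : ContDiff ℝ ∞ f) (x : E2) :
    ∑ j : Fin 2, pd j (fun z => perpGrad f z j) x = 0 := by
  simp only [Fin.sum_univ_two, perpGrad, Matrix.cons_val_zero, Matrix.cons_val_one, pd_neg]
  rw [pd_comm hf 1 0]
  ring

theorem locallyIntegrable_const_mul_norm_inv (c : ℝ) :
    LocallyIntegrable (fun y : E2 => c * ‖y‖⁻¹) := by
  refine locallyIntegrable_of_norm_le_rpow (C := |c|) (α := 1) (by simp) (by simp)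
    (Eventually.of_forall fun x => ?_) ?_
  · simp [Real.rpow_neg_one]
  · exact (measurable_norm.inv.const_mul c).aestronglyMeasurable

theorem integrable_mul_comp_sub_left {g f : E2 → ℝ} (hg : LocallyIntegrable g)
    (hf : Continuous f) (hfc : HasCompactSupport f) (x : E2) :
    Integrable fun y => g y * f (x - y) :=
  hfc.convolutionExists_right (ContinuousLinearMap.mul ℝ ℝ) hg hf x

theorem contDiff_integral_mul_comp_sub {g f : E2 → ℝ} (hg : LocallyIntegrable g)
    (hf : ContDiff ℝ ∞ f) (hfc : HasCompactSupport f) :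
    ContDiff ℝ ∞ fun z => ∫ y, g y * f (z - y) :=
  hfc.contDiff_convolution_right (ContinuousLinearMap.mul ℝ ℝ) hg hf

/-- Partial derivatives of a convolution fall on the smooth factor. -/
theorem pd_integral_mul_comp_sub {g f : E2 → ℝ} (hg : LocallyIntegrable g)
    (hf : ContDiff ℝ ∞ f) (hfc : HasCompactSupport f) (i : Fin 2) (x : E2) :
    pd i (fun z => ∫ y, g y * f (z - y)) x = ∫ y, g y * pd i f (x - y) := by
  have hf1 : ContDiff ℝ 1 f := hf.of_le (by simp)
  have h := hfc.hasFDerivAt_convolution_right (ContinuousLinearMap.mul ℝ ℝ) hg hf1 x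
  have hint := (hfc.fderiv ℝ).convolutionExists_right
    ((ContinuousLinearMap.mul ℝ ℝ).precompR E2) hg (hf1.continuous_fderiv (by simp)) x
  change fderiv ℝ (g ⋆[ContinuousLinearMap.mul ℝ ℝ, volume] f) x _ = _
  rw [h.fderiv, convolution_def, ContinuousLinearMap.integral_apply hint]
  rfl

/-- Integration by parts under a convolution. -/
theorem integral_mul_pd_comp_sub {g f : E2 → ℝ} (hg : ContDiff ℝ ∞ g)
    (hf : ContDiff ℝ ∞ f) (hfc : HasCompactSupport f) (j : Fin 2) (x : E2) :
    ∫ y, g y * pd j f (x - y) = ∫ y, pd j g y * f (x - y) := by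
  have hfd : Differentiable ℝ f := hf.differentiable (by simp)
  have hgd : Differentiable ℝ g := hg.differentiable (by simp)
  have hpd : ∀ y, fderiv ℝ (fun y => f (x - y)) y (EuclideanSpace.single j 1) =
      -pd j f (x - y) := by
    intro y
    have h := (hfd (x - y)).hasFDerivAt.comp y ((hasFDerivAt_id (𝕜 := ℝ) y).const_sub x)
    have h' : fderiv ℝ (fun y => f (x - y)) y = _ := h.fderiv
    rw [h']
    simp [pd]
  have h := integral_mul_fderiv_eq_neg_fderiv_mul_of_integrable (μ := volume) (f := g)
    (g := fun y => f (x - y)) (v := EuclideanSpace.single j 1)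
    (integrable_mul_comp_sub_left (contDiff_pd hg j).continuous.locallyIntegrable
      hf.continuous hfc x)
    (by
      simp only [hpd, mul_neg]
      exact (integrable_mul_comp_sub_left hg.continuous.locallyIntegrable
        (contDiff_pd hf j).continuous (hfc.pd j) x).neg)
    (integrable_mul_comp_sub_left hg.continuous.locallyIntegrable hf.continuous hfc x)
    (fun y _ => hgd y) (fun y _ => (hfd _).comp y (differentiableAt_id.const_sub x))
  simp only [hpd, mul_neg, integral_neg, neg_inj] at h
  exact h

/-- The Riesz kernel, cut off near the origin, is smooth. -/
theorem contDiff_one_sub_mul_norm_inv {b : E2 → ℝ} (hb : ContDiff ℝ ∞ b)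
    (hb1 : ∀ᶠ w in 𝓝 0, b w = 1) (c : ℝ) :
    ContDiff ℝ ∞ fun w => (1 - b w) * (c * ‖w‖⁻¹) := by
  rw [contDiff_iff_contDiffAt]
  intro w
  by_cases hw : w = 0
  · subst hw
    refine (contDiffAt_const (c := (0 : ℝ))).congr_of_eventuallyEq ?_
    filter_upwards [hb1] with w hw
    simp [hw]
  · exact (contDiffAt_const.sub hb.contDiffAt).mul
      (contDiffAt_const.mul ((contDiffAt_norm ℝ hw).inv (by simpa using hw)))

section TimeDependent

variable {T : ℝ} {θ : ℝ → E2 → ℝ} {K : Set E2}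

theorem contDiff_slice {F : Type*} [NormedAddCommGroup F] [NormedSpace ℝ F] {v : ℝ → E2 → F}
    (hv : ContDiff ℝ ∞ fun q : ℝ × E2 => v q.1 q.2) (t : ℝ) : ContDiff ℝ ∞ (v t) :=
  hv.comp (contDiff_const.prodMk contDiff_id : ContDiff ℝ ∞ fun x : E2 => (t, x))

theorem hasDerivAt_time (hθ : ContDiff ℝ ∞ fun q : ℝ × E2 => θ q.1 q.2) (t : ℝ) (x : E2) :
    HasDerivAt (fun s => θ s x) (fderiv ℝ (fun q : ℝ × E2 => θ q.1 q.2) (t, x) (1, 0)) t :=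
  ((hθ.differentiable (by simp) (t, x)).hasFDerivAt).comp_hasDerivAt (f := fun s => (s, x)) t
    ((hasDerivAt_id t).prodMk (hasDerivAt_const t x))

theorem continuous_deriv_time (hθ : ContDiff ℝ ∞ fun q : ℝ × E2 => θ q.1 q.2) :
    Continuous fun q : ℝ × E2 => deriv (fun s => θ s q.2) q.1 := by
  have h : (fun q : ℝ × E2 => deriv (fun s => θ s q.2) q.1) =
      fun q => fderiv ℝ (fun q : ℝ × E2 => θ q.1 q.2) q (1, 0) :=
    funext fun q => (hasDerivAt_time hθ q.1 q.2).deriv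
  rw [h]
  exact (hθ.continuous_fderiv (by simp)).clm_apply continuous_const

/-- The increment of `g * θ` is the time integral of `g * ∂ₜθ`. -/
theorem integral_mul_sub_eq_intervalIntegral
    (hθ : ContDiff ℝ ∞ fun q : ℝ × E2 => θ q.1 q.2) (hK : IsCompact K)
    (hsupp : ∀ s ∈ Icc 0 T, ∀ x ∉ K, deriv (fun r => θ r x) s = 0)
    {g : E2 → ℝ} (hg : Continuous g) {t : ℝ} (ht : t ∈ Icc 0 T) (x : E2) :
    ∫ y, g y * (θ t (x - y) - θ 0 (x - y)) =
      ∫ s in (0 : ℝ)..t, ∫ y, g y * deriv (fun r => θ r (x - y)) s := by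
  have hcont := continuous_deriv_time hθ
  have hF : Continuous fun q : ℝ × E2 => g q.2 * deriv (fun r => θ r (x - q.2)) q.1 :=
    (hg.comp continuous_snd).mul
      (hcont.comp (continuous_fst.prodMk (continuous_const.sub continuous_snd)))
  rw [intervalIntegral_integral_swap]
  · refine integral_congr_ae (Eventually.of_forall fun y => ?_)
    have hcy : Continuous fun s => deriv (fun r => θ r (x - y)) s :=
      hcont.comp (continuous_id.prodMk continuous_const)
    simp only [intervalIntegral.integral_const_mul]
    rw [intervalIntegral.integral_deriv_eq_sub
      (fun s _ => (hasDerivAt_time hθ s (x - y)).differentiableAt) (hcy.intervalIntegrable _ _)]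
  · have hcpt : IsCompact ((fun y => x - y) ⁻¹' K) :=
      (Homeomorph.subLeft x).isCompact_preimage.2 hK
    rw [uIoc_of_le ht.1]
    have hvol : (volume.restrict (Ioc 0 t)).prod (volume : Measure E2) =
        (volume : Measure (ℝ × E2)).restrict (Ioc 0 t ×ˢ univ) := by
      rw [Measure.volume_eq_prod, ← Measure.prod_restrict, Measure.restrict_univ]
    rw [hvol]
    have hon : IntegrableOn (fun q : ℝ × E2 => g q.2 * deriv (fun r => θ r (x - q.2)) q.1)
        (Icc 0 t ×ˢ ((fun y => x - y) ⁻¹' K)) :=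
      hF.continuousOn.integrableOn_compact (isCompact_Icc.prod hcpt)
    refine hon.of_forall_sdiff_eq_zero (measurableSet_Ioc.prod MeasurableSet.univ) ?_
    rintro ⟨s, y⟩ ⟨⟨hs, -⟩, hn⟩
    have hy : x - y ∉ K := fun hy => hn ⟨Ioc_subset_Icc_self hs, hy⟩
    simp [hsupp s ⟨hs.1.le, hs.2.trans ht.2⟩ _ hy]

/-- Convolving the transport equation with `g` moves the spatial derivative onto `g`, provided
the velocity is divergence free. -/
theorem integral_mul_eq_neg_sum_of_transport {g ρ h : E2 → ℝ} {v : E2 → E2}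
    (hg : ContDiff ℝ ∞ g) (hρ : ContDiff ℝ ∞ ρ) (hρc : HasCompactSupport ρ)
    (hv : ContDiff ℝ ∞ v) (hdiv : ∀ x, ∑ j : Fin 2, pd j (fun z => v z j) x = 0)
    (htransport : ∀ x, h x + ∑ j : Fin 2, v x j * pd j ρ x = 0) (x : E2) :
    ∫ y, g y * h (x - y) =
      -∑ j : Fin 2, ∫ y, pd j g y * (ρ (x - y) * v (x - y) j) := by
  have hvj : ∀ j : Fin 2, ContDiff ℝ ∞ fun z => v z j := fun j => contDiff_euclidean.1 hv j
  have hprod : ∀ j : Fin 2, ContDiff ℝ ∞ fun z => ρ z * v z j := fun j => hρ.mul (hvj j)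
  have hprodc : ∀ j : Fin 2, HasCompactSupport fun z => ρ z * v z j := fun j => hρc.mul_right
  have hh : ∀ z, h z = -∑ j : Fin 2, pd j (fun z => ρ z * v z j) z := by
    intro z
    have hsum : ∑ j : Fin 2, pd j (fun z => ρ z * v z j) z =
        ρ z * ∑ j : Fin 2, pd j (fun z => v z j) z + ∑ j : Fin 2, v z j * pd j ρ z := by
      rw [Finset.mul_sum, ← Finset.sum_add_distrib]
      exact Finset.sum_congr rfl fun j _ => pd_mul (hρ.differentiable (by simp) z)
        ((hvj j).differentiable (by simp) z) j
    rw [hsum, hdiv z]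
    linarith [htransport z]
  simp only [hh, mul_neg, Finset.mul_sum, integral_neg]
  rw [integral_finsetSum _ fun j _ => integrable_mul_comp_sub_left
    hg.continuous.locallyIntegrable (contDiff_pd (hprod j) j).continuous ((hprodc j).pd j) x]
  exact congrArg _ (Finset.sum_congr rfl fun j _ =>
    integral_mul_pd_comp_sub hg (hprod j) (hprodc j) j x)

/-- The Serfati-type identity for a single partial derivative of `Φ * θ`, where the kernel `Φ` is
split into a locally integrable part `Φ - Ψ` and a smooth part `Ψ`. -/
theorem pd_conv_eq_add_sub_intervalIntegral {u : ℝ → E2 → E2} {Φ Ψ : E2 → ℝ}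
    (hΦ : LocallyIntegrable Φ) (hΨ : ContDiff ℝ ∞ Ψ)
    (hθ : ContDiff ℝ ∞ fun q : ℝ × E2 => θ q.1 q.2)
    (hu : ContDiff ℝ ∞ fun q : ℝ × E2 => u q.1 q.2) (hK : IsCompact K)
    (hsupp : ∀ t ∈ Icc 0 T, Function.support (θ t) ⊆ K)
    (hpde : ∀ t ∈ Icc 0 T, ∀ x : E2,
      deriv (fun s => θ s x) t + ∑ j : Fin 2, u t x j * pd j (θ t) x = 0)
    (hdiv : ∀ t ∈ Icc 0 T, ∀ x, ∑ j : Fin 2, pd j (fun z => u t z j) x = 0)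
    {t : ℝ} (ht : t ∈ Icc 0 T) (x : E2) (k : Fin 2) :
    pd k (fun z => ∫ y, Φ y * θ t (z - y)) x =
      pd k (fun z => ∫ y, Φ y * θ 0 (z - y)) x
        + (∫ y, (Φ y - Ψ y) * pd k (fun z => θ t z - θ 0 z) (x - y))
        - ∫ s in (0 : ℝ)..t, ∑ j : Fin 2,
            ∫ y, pd j (pd k Ψ) y * (θ s (x - y) * u s (x - y) j) := by
  have h0 : (0 : ℝ) ∈ Icc 0 T := ⟨le_rfl, ht.1.trans ht.2⟩
  have hslice := contDiff_slice hθ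
  have hcs : ∀ s ∈ Icc 0 T, HasCompactSupport (θ s) := fun s hs =>
    HasCompactSupport.of_support_subset_isCompact hK (hsupp s hs)
  have hD : ContDiff ℝ ∞ fun z => θ t z - θ 0 z := (hslice t).sub (hslice 0)
  have hDc : HasCompactSupport fun z => θ t z - θ 0 z := (hcs t ht).sub (hcs 0 h0)
  have hpdD := (contDiff_pd hD k).continuous
  have hΨi : LocallyIntegrable Ψ := hΨ.continuous.locallyIntegrable
  have hderiv : ∀ s ∈ Icc 0 T, ∀ z ∉ K, deriv (fun r => θ r z) s = 0 := by
    intro s hs z hz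
    have hpd : ∀ j : Fin 2, pd j (θ s) z = 0 := fun j => by
      have hz' : z ∉ tsupport (θ s) := fun h => hz (closure_minimal (hsupp s hs) hK.isClosed h)
      simp [pd, fderiv_of_notMem_tsupport ℝ hz']
    simpa [hpd] using hpde s hs z
  have hsplit : pd k (fun z => ∫ y, Φ y * θ t (z - y)) x -
      pd k (fun z => ∫ y, Φ y * θ 0 (z - y)) x =
      (∫ y, (Φ y - Ψ y) * pd k (fun z => θ t z - θ 0 z) (x - y)) +
        ∫ y, Ψ y * pd k (fun z => θ t z - θ 0 z) (x - y) := by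
    rw [pd_integral_mul_comp_sub hΦ (hslice t) (hcs t ht),
      pd_integral_mul_comp_sub hΦ (hslice 0) (hcs 0 h0),
      ← integral_sub
        (integrable_mul_comp_sub_left hΦ (contDiff_pd (hslice t) k).continuous
          ((hcs t ht).pd k) x)
        (integrable_mul_comp_sub_left hΦ (contDiff_pd (hslice 0) k).continuous
          ((hcs 0 h0).pd k) x),
      ← integral_add
        (integrable_mul_comp_sub_left (g := fun y => Φ y - Ψ y) (hΦ.sub hΨi) hpdD (hDc.pd k) x)
        (integrable_mul_comp_sub_left hΨi hpdD (hDc.pd k) x)]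
    refine integral_congr_ae (Eventually.of_forall fun y => ?_)
    beta_reduce
    rw [pd_sub ((hslice t).differentiable (by simp) _) ((hslice 0).differentiable (by simp) _)]
    ring
  have hfar : ∫ y, Ψ y * pd k (fun z => θ t z - θ 0 z) (x - y) =
      -∫ s in (0 : ℝ)..t, ∑ j : Fin 2,
        ∫ y, pd j (pd k Ψ) y * (θ s (x - y) * u s (x - y) j) := by
    rw [integral_mul_pd_comp_sub hΨ hD hDc,
      integral_mul_sub_eq_intervalIntegral hθ hK hderiv (contDiff_pd hΨ k).continuous ht,
      ← intervalIntegral.integral_neg]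
    refine intervalIntegral.integral_congr fun s hs => ?_
    rw [uIcc_of_le ht.1] at hs
    have hsT : s ∈ Icc 0 T := ⟨hs.1, hs.2.trans ht.2⟩
    exact integral_mul_eq_neg_sum_of_transport (h := fun z => deriv (fun r => θ r z) s)
      (contDiff_pd hΨ k) (hslice s) (hcs s hsT) (contDiff_slice hu s) (hdiv s hsT)
      (hpde s hsT) x
  linarith

end TimeDependent

end SerfatiIdentity

/-- **Lemma A.1 of the paper**: the Serfati-type identity for smooth, compactly
supported (in space) solutions `(u, θ)` of the surface quasi-geostrophic equation
with constitutive law `u = ∇^⊥(Φ * θ)`, `Φ(x) = c/|x|`. -/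
theorem sqg_serfati_identity (T c : ℝ) (hT : 0 < T) (hc : 0 < c)
    (a : E2 → ℝ) (ha : ContDiff ℝ (⊤ : ℕ∞) a)
    (ha0 : ∀ x, 0 ≤ a x) (ha1 : ∀ x, a x ≤ 1)
    (haone : ∀ x ∈ ball (0 : E2) 1, a x = 1)
    (hasupp : Function.support a ⊆ ball (0 : E2) 2)
    (θ : ℝ → E2 → ℝ) (u : ℝ → E2 → E2)
    (hθ : ContDiff ℝ (⊤ : ℕ∞) fun q : ℝ × E2 => θ q.1 q.2)
    (hu : ContDiff ℝ (⊤ : ℕ∞) fun q : ℝ × E2 => u q.1 q.2)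
    (K : Set E2) (hK : IsCompact K)
    (hsupp : ∀ t ∈ Set.Icc (0 : ℝ) T, Function.support (θ t) ⊆ K)
    -- (i) the transport equation `∂ₜθ + u·∇θ = 0`
    (hpde : ∀ t ∈ Set.Icc (0 : ℝ) T, ∀ x : E2,
      deriv (fun s => θ s x) t + ∑ j : Fin 2, u t x j * pd j (θ t) x = 0)
    -- (ii) the constitutive law `u(t) = ∇^⊥(Φ * θ(t))`
    (hconst : ∀ t ∈ Set.Icc (0 : ℝ) T, ∀ (x : E2) (i : Fin 2),
      u t x i = perpGrad (fun z => ∫ y, c * ‖y‖⁻¹ * θ t (z - y)) x i) :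
    ∀ lam : ℝ, 0 < lam → ∀ t ∈ Set.Icc (0 : ℝ) T, ∀ (x : E2) (i : Fin 2),
      u t x i
        = u 0 x i
          + (∫ y, (a (lam⁻¹ • y) * (c * ‖y‖⁻¹)) *
              perpGrad (fun z => θ t z - θ 0 z) (x - y) i)
          - ∫ s in (0 : ℝ)..t, ∑ j : Fin 2,
              ∫ y, pd j (fun z => perpGrad
                    (fun w => (1 - a (lam⁻¹ • w)) * (c * ‖w‖⁻¹)) z i) y
                * (θ s (x - y) * u s (x - y) j) := by
  intro lam hlam t ht x i
  have hΦ := locallyIntegrable_const_mul_norm_inv c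
  have hdiv : ∀ s ∈ Set.Icc 0 T, ∀ z, ∑ j : Fin 2, pd j (fun w => u s w j) z = 0 := by
    intro s hs z
    have hψ := contDiff_integral_mul_comp_sub hΦ (contDiff_slice hθ s)
      (HasCompactSupport.of_support_subset_isCompact hK (hsupp s hs))
    simpa only [hconst s hs] using sum_pd_perpGrad_eq_zero hψ z
  have hΨ : ContDiff ℝ (⊤ : ℕ∞) fun w : E2 => (1 - a (lam⁻¹ • w)) * (c * ‖w‖⁻¹) := by
    refine contDiff_one_sub_mul_norm_inv (ha.comp (contDiff_const_smul lam⁻¹)) ?_ c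
    filter_upwards [ball_mem_nhds (0 : E2) hlam] with w hw
    refine haone _ ?_
    rw [mem_ball_zero_iff] at hw ⊢
    rw [norm_smul, norm_inv, Real.norm_of_nonneg hlam.le, inv_mul_lt_one₀ hlam]
    exact hw
  have key := pd_conv_eq_add_sub_intervalIntegral hΦ hΨ hθ hu hK hsupp hpde hdiv ht x
  have hnear : ∀ y : E2, c * ‖y‖⁻¹ - (1 - a (lam⁻¹ • y)) * (c * ‖y‖⁻¹) =
      a (lam⁻¹ • y) * (c * ‖y‖⁻¹) := fun y => by ring
  simp only [hnear] at key
  rw [hconst t ht x i, hconst 0 ⟨le_rfl, hT.le⟩ x i]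
  fin_cases i
  · simp only [perpGrad, Fin.zero_eta, Matrix.cons_val_zero, pd_neg, neg_mul, mul_neg,
      integral_neg, Finset.sum_neg_distrib, intervalIntegral.integral_neg]
    linarith [key 1]
  · simpa [perpGrad] using key 0
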